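/- Assume γL² < 1, that there exists ω > 0 with Σ_s D(s)·⟨x(s), v⟩² ≥ ω·‖v‖₂² for every v ∈ ℝᵈ, and set α := (1 − γL²)/(4L³). Let (w_t)_{t≥0} be a sequence in W such that for every t, w_{t+1} is the metric projection of w_t + α·ḡ(w_t) onto W, and let w* ∈ W be a fixed point of this projected update. Then for every T ≥ 0, ‖w* − w_T‖₂² ≤ exp(−T·ω·((1 − γL²)/(2L²))²)·‖w* − w_0‖₂². -/

import Mathlib

open scoped RealInnerProductSpace BigOperators
open Finset

/-- The per-sample TD update
`g(w; s, s') := (f(r(s,s') + γ⟨x(s'), w⟩) − f(⟨x(s), w⟩)) • x(s)`. -/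
noncomputable def tdSample {S : Type*} {d : ℕ} (x : S → EuclideanSpace ℝ (Fin d))
    (r : S → S → ℝ) (γ : ℝ) (f : ℝ → ℝ) (w : EuclideanSpace ℝ (Fin d)) (s s' : S) :
    EuclideanSpace ℝ (Fin d) :=
  (f (r s s' + γ * ⟪x s', w⟫) - f ⟪x s, w⟫) • x s

/-- The expected TD update `ḡ(w) := Σ_{s,s'} D(s) P(s,s') g(w; s, s')`. -/
noncomputable def tdExpected {S : Type*} [Fintype S] {d : ℕ} (D : S → ℝ) (P : S → S → ℝ)
    (x : S → EuclideanSpace ℝ (Fin d)) (r : S → S → ℝ) (γ : ℝ) (f : ℝ → ℝ)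
    (w : EuclideanSpace ℝ (Fin d)) : EuclideanSpace ℝ (Fin d) :=
  ∑ s, ∑ s', (D s * P s s') • tdSample x r γ f w s s'

/-! Nonexpansiveness of the projection reduces the analysis to one unprojected step. If the update
`g` satisfies `⟪v - w, g v - g w⟫ ≤ -m Q(v - w)` and `‖g v - g w‖² ≤ M Q(v - w)` for the *same*
quadratic form `Q ≥ ω ‖·‖²`, expanding the square shrinks `‖v - w‖²` by
`(2 α m - α² M) Q(v - w)`, and `1 - y ≤ exp (-y)` turns this into an exponential rate.

For the expected TD update, `Q(v)` is the second moment `∑ s, D s * ⟪x s, v⟫ ^ 2`: stationarity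
makes both ends of a transition `D`-distributed, so every term at the successor state is charged to
the same `Q`. With `f` `μ`-strongly monotone and `ℓ`-Lipschitz this gives `m = μ - γ ℓ` and
`M = ((1 + γ) ℓ)²`. -/

lemma norm_add_smul_sq_le {E : Type*} [SeminormedAddCommGroup E] [InnerProductSpace ℝ E] {u h : E}
    {α m M q : ℝ} (hα : 0 ≤ α) (hinner : ⟪u, h⟫ ≤ -(m * q)) (hnorm : ‖h‖ ^ 2 ≤ M * q) :
    ‖u + α • h‖ ^ 2 ≤ ‖u‖ ^ 2 - (2 * α * m - α ^ 2 * M) * q :=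
  calc ‖u + α • h‖ ^ 2
      = ‖u‖ ^ 2 + 2 * (α * ⟪u, h⟫) + α ^ 2 * ‖h‖ ^ 2 := by
        rw [norm_add_sq_real, inner_smul_right, norm_smul, mul_pow, Real.norm_eq_abs, sq_abs]
    _ ≤ ‖u‖ ^ 2 + 2 * (α * -(m * q)) + α ^ 2 * (M * q) := by gcongr
    _ = ‖u‖ ^ 2 - (2 * α * m - α ^ 2 * M) * q := by ring

/-- `p` is a metric projection of `v` onto `W`, i.e. a nearest point of `W`; a predicate rather than
a function, so that neither existence nor uniqueness is presupposed. -/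
def IsMetricProjection {E : Type*} [SeminormedAddCommGroup E] (W : Set E) (v p : E) : Prop :=
  p ∈ W ∧ ∀ u ∈ W, ‖v - p‖ ≤ ‖v - u‖

section Projection

variable {E : Type*} [NormedAddCommGroup E] [InnerProductSpace ℝ E] {W : Set E}

namespace IsMetricProjection

variable {v v' p p' : E}

lemma inner_sub_le_zero (h : IsMetricProjection W v p) (hW : Convex ℝ W) {u : E} (hu : u ∈ W) :
    ⟪v - p, u - p⟫ ≤ 0 := by
  have : Nonempty W := ⟨⟨p, h.1⟩⟩
  have hbdd : BddBelow (Set.range fun u : W => ‖v - u‖) :=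
    ⟨0, Set.forall_mem_range.2 fun _ => norm_nonneg _⟩
  have hmin : ‖v - p‖ = ⨅ u : W, ‖v - u‖ :=
    le_antisymm (le_ciInf fun u => h.2 u u.2) (ciInf_le hbdd ⟨p, h.1⟩)
  exact (norm_eq_iInf_iff_real_inner_le_zero hW h.1).1 hmin u hu

lemma norm_sub_sq_le_inner (h : IsMetricProjection W v p) (h' : IsMetricProjection W v' p')
    (hW : Convex ℝ W) : ‖p - p'‖ ^ 2 ≤ ⟪v - v', p - p'⟫ := by
  have hsum : ⟪v - p, p' - p⟫ + ⟪v' - p', p - p'⟫ = ‖p - p'‖ ^ 2 - ⟪v - v', p - p'⟫ := by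
    rw [← real_inner_self_eq_norm_sq]
    simp only [inner_sub_left, inner_sub_right]
    ring
  linarith [h.inner_sub_le_zero hW h'.1, h'.inner_sub_le_zero hW h.1]

lemma norm_sub_le (h : IsMetricProjection W v p) (h' : IsMetricProjection W v' p')
    (hW : Convex ℝ W) : ‖p - p'‖ ≤ ‖v - v'‖ := by
  have hmul : ‖p - p'‖ * ‖p - p'‖ ≤ ‖v - v'‖ * ‖p - p'‖ := by
    rw [← pow_two]
    exact (h.norm_sub_sq_le_inner h' hW).trans (real_inner_le_norm _ _)
  rcases (norm_nonneg (p - p')).eq_or_lt with hzero | hpos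
  · exact hzero ▸ norm_nonneg _
  · exact le_of_mul_le_mul_right hmul hpos

end IsMetricProjection

lemma norm_sub_sq_le_exp_of_projected_iteration (hW : Convex ℝ W) {g : E → E} {Q : E → ℝ}
    {α m M ω ρ : ℝ} (hα : 0 ≤ α)
    (hinner : ∀ v w, ⟪v - w, g v - g w⟫ ≤ -(m * Q (v - w)))
    (hnorm : ∀ v w, ‖g v - g w‖ ^ 2 ≤ M * Q (v - w))
    (hQ : ∀ v, 0 ≤ Q v) (hQω : ∀ v, ω * ‖v‖ ^ 2 ≤ Q v)
    (hρ0 : 0 ≤ ρ) (hρ : ρ ≤ 2 * α * m - α ^ 2 * M)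
    {w : ℕ → E} (hw : ∀ t, IsMetricProjection W (w t + α • g (w t)) (w (t + 1)))
    {wstar : E} (hwstar : IsMetricProjection W (wstar + α • g wstar) wstar) (T : ℕ) :
    ‖wstar - w T‖ ^ 2 ≤ Real.exp (-(T : ℝ) * ω * ρ) * ‖wstar - w 0‖ ^ 2 := by
  have hstep (t : ℕ) : ‖wstar - w (t + 1)‖ ^ 2 ≤ Real.exp (-(ω * ρ)) * ‖wstar - w t‖ ^ 2 :=
    calc ‖wstar - w (t + 1)‖ ^ 2
        ≤ ‖wstar + α • g wstar - (w t + α • g (w t))‖ ^ 2 := by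
          gcongr
          exact hwstar.norm_sub_le (hw t) hW
      _ = ‖(wstar - w t) + α • (g wstar - g (w t))‖ ^ 2 := by congr 2; module
      _ ≤ ‖wstar - w t‖ ^ 2 - (2 * α * m - α ^ 2 * M) * Q (wstar - w t) :=
          norm_add_smul_sq_le hα (hinner _ _) (hnorm _ _)
      _ ≤ ‖wstar - w t‖ ^ 2 - ρ * Q (wstar - w t) := by
          gcongr
          exact hQ _
      _ ≤ ‖wstar - w t‖ ^ 2 - ρ * (ω * ‖wstar - w t‖ ^ 2) := by
          gcongr
          exact hQω _
      _ = (1 - ω * ρ) * ‖wstar - w t‖ ^ 2 := by ring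
      _ ≤ Real.exp (-(ω * ρ)) * ‖wstar - w t‖ ^ 2 := by
          gcongr
          exact Real.one_sub_le_exp_neg _
  have hexp : Real.exp (-(T : ℝ) * ω * ρ) = Real.exp (-(ω * ρ)) ^ T := by
    rw [← Real.exp_nat_mul]
    ring_nf
  rw [hexp]
  exact le_geom (u := fun t => ‖wstar - w t‖ ^ 2) (Real.exp_nonneg _) T fun t _ => hstep t

end Projection

lemma mul_sq_sub_le_of_monotone_of_mul_abs_sub_le {μ : ℝ} {f : ℝ → ℝ} (hf : Monotone f)
    (h : ∀ a b, μ * |a - b| ≤ |f a - f b|) (a b : ℝ) :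
    μ * (a - b) ^ 2 ≤ (f a - f b) * (a - b) := by
  have hsign : 0 ≤ (f a - f b) * (a - b) := by
    rcases le_total a b with hab | hab
    · exact mul_nonneg_of_nonpos_of_nonpos (sub_nonpos.2 (hf hab)) (sub_nonpos.2 hab)
    · exact mul_nonneg (sub_nonneg.2 (hf hab)) (sub_nonneg.2 hab)
  calc μ * (a - b) ^ 2 = μ * |a - b| * |a - b| := by rw [← sq_abs, pow_two, mul_assoc]
    _ ≤ |f a - f b| * |a - b| := by gcongr; exact h a b
    _ = (f a - f b) * (a - b) := by rw [← abs_mul, abs_of_nonneg hsign]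

lemma abs_map_add_mul_sub_le {γ : ℝ} {ℓ : NNReal} {f : ℝ → ℝ} (hγ : 0 ≤ γ) (hf : LipschitzWith ℓ f)
    (c a b : ℝ) : |f (c + γ * a) - f (c + γ * b)| ≤ ℓ * (γ * |a - b|) := by
  have h := hf.dist_le_mul (c + γ * a) (c + γ * b)
  rwa [Real.dist_eq, Real.dist_eq, add_sub_add_left_eq_sub, ← mul_sub, abs_mul,
    abs_of_nonneg hγ] at h

lemma sum_stationary_transition {S R : Type*} [Fintype S] [CommSemiring R] {D : S → R}
    {P : S → S → R} (hP1 : ∀ s, ∑ s', P s s' = 1) (hstat : ∀ s', ∑ s, D s * P s s' = D s')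
    (a b : R) (F : S → R) :
    ∑ i : S × S, D i.1 * P i.1 i.2 * (a * F i.1 + b * F i.2) = (a + b) * ∑ s, D s * F s := by
  have hfst : ∑ i : S × S, D i.1 * P i.1 i.2 * F i.1 = ∑ s, D s * F s := by
    simp only [Fintype.sum_prod_type, ← sum_mul, ← mul_sum, hP1, mul_one]
  have hsnd : ∑ i : S × S, D i.1 * P i.1 i.2 * F i.2 = ∑ s, D s * F s := by
    simp only [Fintype.sum_prod_type_right, ← sum_mul, hstat]
  simp only [mul_add, sum_add_distrib, mul_left_comm _ a, mul_left_comm _ b, ← mul_sum, hfst, hsnd,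
    add_mul]

section TDError

variable {S E : Type*} [SeminormedAddCommGroup E] [InnerProductSpace ℝ E] {x : S → E} {γ μ : ℝ}
  {ℓ : NNReal} {f : ℝ → ℝ}

/-- The temporal-difference error of the transition `s → s'`, the scalar that multiplies `x s` in
`tdSample`. -/
noncomputable def tdError (x : S → E) (r : S → S → ℝ) (γ : ℝ) (f : ℝ → ℝ) (w : E)
    (s s' : S) : ℝ :=
  f (r s s' + γ * ⟪x s', w⟫) - f ⟪x s, w⟫

lemma tdError_sub_mul_inner_le (r : S → S → ℝ) (hγ : 0 ≤ γ)
    (hfMono : ∀ a b, μ * (a - b) ^ 2 ≤ (f a - f b) * (a - b)) (hfLip : LipschitzWith ℓ f)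
    (v w : E) (s s' : S) :
    (tdError x r γ f v s s' - tdError x r γ f w s s') * ⟪x s, v - w⟫ ≤
      (γ * ℓ / 2 - μ) * ⟪x s, v - w⟫ ^ 2 + γ * ℓ / 2 * ⟪x s', v - w⟫ ^ 2 := by
  have hcur := hfMono ⟪x s, v⟫ ⟪x s, w⟫
  have hsucc := abs_map_add_mul_sub_le hγ hfLip (r s s') ⟪x s', v⟫ ⟪x s', w⟫
  rw [← inner_sub_right] at hcur hsucc
  unfold tdError
  set A := f (r s s' + γ * ⟪x s', v⟫) - f (r s s' + γ * ⟪x s', w⟫)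
  set z := ⟪x s, v - w⟫
  set z' := ⟪x s', v - w⟫
  have hcross : A * z ≤ γ * ℓ / 2 * (z' ^ 2 + z ^ 2) :=
    calc A * z ≤ |A| * |z| := (le_abs_self _).trans_eq (abs_mul A z)
      _ ≤ ℓ * (γ * |z'|) * |z| := by gcongr
      _ = γ * ℓ / 2 * (2 * |z'| * |z|) := by ring
      _ ≤ γ * ℓ / 2 * (|z'| ^ 2 + |z| ^ 2) := by gcongr; exact two_mul_le_add_sq _ _
      _ = γ * ℓ / 2 * (z' ^ 2 + z ^ 2) := by rw [sq_abs, sq_abs]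
  linarith

lemma tdError_sub_sq_le (r : S → S → ℝ) (hγ : 0 ≤ γ) (hfLip : LipschitzWith ℓ f)
    (v w : E) (s s' : S) :
    (tdError x r γ f v s s' - tdError x r γ f w s s') ^ 2 ≤
      (1 + γ) * ℓ ^ 2 * ⟪x s, v - w⟫ ^ 2 + (1 + γ) * ℓ ^ 2 * γ * ⟪x s', v - w⟫ ^ 2 := by
  have hcur : |f ⟪x s, v⟫ - f ⟪x s, w⟫| ≤ ℓ * |⟪x s, v⟫ - ⟪x s, w⟫| := hfLip.dist_le_mul _ _
  have hsucc := abs_map_add_mul_sub_le hγ hfLip (r s s') ⟪x s', v⟫ ⟪x s', w⟫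
  rw [← inner_sub_right] at hcur hsucc
  set z := ⟪x s, v - w⟫
  set z' := ⟪x s', v - w⟫
  have habs : |tdError x r γ f v s s' - tdError x r γ f w s s'| ≤ ℓ * (γ * |z'| + |z|) := by
    unfold tdError
    rw [sub_sub_sub_comm]
    linarith [abs_sub (f (r s s' + γ * ⟪x s', v⟫) - f (r s s' + γ * ⟪x s', w⟫))
      (f ⟪x s, v⟫ - f ⟪x s, w⟫)]
  -- Cauchy–Schwarz with weights `1` and `γ`, the source of the factor `1 + γ`.
  have hweighted : (γ * |z'| + |z|) ^ 2 ≤ (1 + γ) * (|z| ^ 2 + γ * |z'| ^ 2) := by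
    linarith [mul_nonneg hγ (sq_nonneg (|z'| - |z|))]
  calc (tdError x r γ f v s s' - tdError x r γ f w s s') ^ 2
      ≤ (ℓ * (γ * |z'| + |z|)) ^ 2 := sq_le_sq.2 (habs.trans (le_abs_self _))
    _ = ℓ ^ 2 * (γ * |z'| + |z|) ^ 2 := mul_pow _ _ _
    _ ≤ ℓ ^ 2 * ((1 + γ) * (|z| ^ 2 + γ * |z'| ^ 2)) := by gcongr
    _ = (1 + γ) * ℓ ^ 2 * z ^ 2 + (1 + γ) * ℓ ^ 2 * γ * z' ^ 2 := by
      rw [sq_abs, sq_abs]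
      ring

/-- The second moment `𝔼 ⟪x s, v⟫²` of the linear value function of `v` under the state weights
`D`; the quadratic form against which the expected update is compared. -/
noncomputable def featureSecondMoment [Fintype S] (D : S → ℝ) (x : S → E) (v : E) : ℝ :=
  ∑ s, D s * ⟪x s, v⟫ ^ 2

lemma featureSecondMoment_nonneg [Fintype S] {D : S → ℝ} (hD : ∀ s, 0 ≤ D s) (v : E) :
    0 ≤ featureSecondMoment D x v :=
  sum_nonneg fun s _ => mul_nonneg (hD s) (sq_nonneg _)

end TDError

section ExpectedUpdate

variable {S : Type*} [Fintype S] {d : ℕ} {D : S → ℝ} {P : S → S → ℝ}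
  {x : S → EuclideanSpace ℝ (Fin d)} {γ μ : ℝ} {ℓ : NNReal} {f : ℝ → ℝ}

lemma tdExpected_sub (D : S → ℝ) (P : S → S → ℝ) (x : S → EuclideanSpace ℝ (Fin d))
    (r : S → S → ℝ) (γ : ℝ) (f : ℝ → ℝ) (v w : EuclideanSpace ℝ (Fin d)) :
    tdExpected D P x r γ f v - tdExpected D P x r γ f w =
      ∑ i : S × S, (D i.1 * P i.1 i.2) •
        (tdError x r γ f v i.1 i.2 - tdError x r γ f w i.1 i.2) • x i.1 := by
  simp only [tdExpected, tdSample, tdError, Fintype.sum_prod_type, ← sum_sub_distrib, ← smul_sub,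
    ← sub_smul]

lemma inner_tdExpected_sub_le (r : S → S → ℝ) (hD : ∀ s, 0 ≤ D s) (hP : ∀ s s', 0 ≤ P s s')
    (hP1 : ∀ s, ∑ s', P s s' = 1) (hstat : ∀ s', ∑ s, D s * P s s' = D s') (hγ : 0 ≤ γ)
    (hfMono : ∀ a b, μ * (a - b) ^ 2 ≤ (f a - f b) * (a - b)) (hfLip : LipschitzWith ℓ f)
    (v w : EuclideanSpace ℝ (Fin d)) :
    ⟪v - w, tdExpected D P x r γ f v - tdExpected D P x r γ f w⟫ ≤
      -((μ - γ * ℓ) * featureSecondMoment D x (v - w)) :=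
  calc ⟪v - w, tdExpected D P x r γ f v - tdExpected D P x r γ f w⟫
      = ∑ i : S × S, D i.1 * P i.1 i.2 *
          ((tdError x r γ f v i.1 i.2 - tdError x r γ f w i.1 i.2) * ⟪x i.1, v - w⟫) := by
        simp only [tdExpected_sub, inner_sum, inner_smul_right, real_inner_comm]
    _ ≤ ∑ i : S × S, D i.1 * P i.1 i.2 *
          ((γ * ℓ / 2 - μ) * ⟪x i.1, v - w⟫ ^ 2 + γ * ℓ / 2 * ⟪x i.2, v - w⟫ ^ 2) := by
        gcongr with i
        · exact mul_nonneg (hD _) (hP _ _)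
        · exact tdError_sub_mul_inner_le r hγ hfMono hfLip v w i.1 i.2
    _ = -((μ - γ * ℓ) * featureSecondMoment D x (v - w)) := by
        rw [sum_stationary_transition hP1 hstat _ _ fun s => ⟪x s, v - w⟫ ^ 2, featureSecondMoment]
        ring

lemma norm_tdExpected_sub_sq_le (r : S → S → ℝ) (hD : ∀ s, 0 ≤ D s) (hD1 : ∑ s, D s = 1)
    (hP : ∀ s s', 0 ≤ P s s') (hP1 : ∀ s, ∑ s', P s s' = 1)
    (hstat : ∀ s', ∑ s, D s * P s s' = D s') (hx : ∀ s, ‖x s‖ ≤ 1) (hγ : 0 ≤ γ)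
    (hfLip : LipschitzWith ℓ f) (v w : EuclideanSpace ℝ (Fin d)) :
    ‖tdExpected D P x r γ f v - tdExpected D P x r γ f w‖ ^ 2 ≤
      ((1 + γ) * ℓ) ^ 2 * featureSecondMoment D x (v - w) := by
  have hweight (i : S × S) : 0 ≤ D i.1 * P i.1 i.2 := mul_nonneg (hD _) (hP _ _)
  have hweight1 : ∑ i : S × S, D i.1 * P i.1 i.2 = 1 := by
    simp only [Fintype.sum_prod_type, ← mul_sum, hP1, mul_one, hD1]
  have hconvex : ConvexOn ℝ Set.univ fun u : EuclideanSpace ℝ (Fin d) => ‖u‖ ^ 2 :=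
    convexOn_univ_norm.pow (fun _ _ => norm_nonneg _) 2
  rw [tdExpected_sub]
  set δ := fun i : S × S => tdError x r γ f v i.1 i.2 - tdError x r γ f w i.1 i.2
  have hsmul (i : S × S) : ‖δ i • x i.1‖ ^ 2 ≤ δ i ^ 2 := by
    rw [norm_smul, mul_pow, Real.norm_eq_abs, sq_abs]
    exact mul_le_of_le_one_right (sq_nonneg _) (pow_le_one₀ (norm_nonneg _) (hx _))
  calc ‖∑ i : S × S, (D i.1 * P i.1 i.2) • δ i • x i.1‖ ^ 2
      ≤ ∑ i : S × S, D i.1 * P i.1 i.2 * ‖δ i • x i.1‖ ^ 2 :=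
        hconvex.map_sum_le (fun i _ => hweight i) hweight1 fun _ _ => Set.mem_univ _
    _ ≤ ∑ i : S × S, D i.1 * P i.1 i.2 * ((1 + γ) * ℓ ^ 2 * ⟪x i.1, v - w⟫ ^ 2 +
          (1 + γ) * ℓ ^ 2 * γ * ⟪x i.2, v - w⟫ ^ 2) := by
        gcongr with i
        · exact hweight i
        · exact (hsmul i).trans (tdError_sub_sq_le r hγ hfLip v w i.1 i.2)
    _ = ((1 + γ) * ℓ) ^ 2 * featureSecondMoment D x (v - w) := by
        rw [sum_stationary_transition hP1 hstat _ _ fun s => ⟪x s, v - w⟫ ^ 2, featureSecondMoment]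
        ring

theorem td_expected_update_last_iterate_rate_general (r : S → S → ℝ)
    (hD : ∀ s, 0 ≤ D s) (hD1 : ∑ s, D s = 1)
    (hP : ∀ s s', 0 ≤ P s s') (hP1 : ∀ s, ∑ s', P s s' = 1)
    (hstat : ∀ s', ∑ s, D s * P s s' = D s') (hx : ∀ s, ‖x s‖ ≤ 1) (hγ : 0 ≤ γ)
    (hfMono : ∀ a b, μ * (a - b) ^ 2 ≤ (f a - f b) * (a - b)) (hfLip : LipschitzWith ℓ f)
    {W : Set (EuclideanSpace ℝ (Fin d))} (hW : Convex ℝ W) {ω : ℝ}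
    (hcov : ∀ v, ω * ‖v‖ ^ 2 ≤ featureSecondMoment D x v) {α ρ : ℝ} (hα : 0 ≤ α)
    (hρ0 : 0 ≤ ρ) (hρ : ρ ≤ 2 * α * (μ - γ * ℓ) - α ^ 2 * ((1 + γ) * ℓ) ^ 2)
    {w : ℕ → EuclideanSpace ℝ (Fin d)}
    (hw : ∀ t, IsMetricProjection W (w t + α • tdExpected D P x r γ f (w t)) (w (t + 1)))
    {wstar : EuclideanSpace ℝ (Fin d)}
    (hwstar : IsMetricProjection W (wstar + α • tdExpected D P x r γ f wstar) wstar) (T : ℕ) :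
    ‖wstar - w T‖ ^ 2 ≤ Real.exp (-(T : ℝ) * ω * ρ) * ‖wstar - w 0‖ ^ 2 :=
  norm_sub_sq_le_exp_of_projected_iteration hW hα
    (inner_tdExpected_sub_le r hD hP hP1 hstat hγ hfMono hfLip)
    (norm_tdExpected_sub_sq_le r hD hD1 hP hP1 hstat hx hγ hfLip)
    (featureSecondMoment_nonneg hD) hcov hρ0 hρ hw hwstar T

end ExpectedUpdate

-- The step size `(1 - γ L²) / (4 L³)` maximises `2 α (1 / L - γ L) - α² (2 L)²` over `α`.
lemma sq_le_contraction_rate_of_step_size {γ L : ℝ} (hγ0 : 0 ≤ γ) (hγ1 : γ ≤ 1) (hL : 0 < L) :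
    ((1 - γ * L ^ 2) / (2 * L ^ 2)) ^ 2 ≤
      2 * ((1 - γ * L ^ 2) / (4 * L ^ 3)) * (1 / L - γ * L) -
        ((1 - γ * L ^ 2) / (4 * L ^ 3)) ^ 2 * ((1 + γ) * L) ^ 2 :=
  calc ((1 - γ * L ^ 2) / (2 * L ^ 2)) ^ 2
      = 2 * ((1 - γ * L ^ 2) / (4 * L ^ 3)) * (1 / L - γ * L) -
          ((1 - γ * L ^ 2) / (4 * L ^ 3)) ^ 2 * ((1 + 1) * L) ^ 2 := by
        field_simp
        ring
    _ ≤ _ := by gcongr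

/-- last-iterate exponential convergence of the projected expected TD
update: `‖w* − w_T‖² ≤ exp(−Tω((1 − γL²)/(2L²))²) ‖w* − w₀‖²`. -/
theorem td_expected_update_last_iterate_rate {S : Type*} [Fintype S] [Nonempty S] {d : ℕ}
    (D : S → ℝ) (P : S → S → ℝ) (x : S → EuclideanSpace ℝ (Fin d))
    (r : S → S → ℝ) (γ L : ℝ) (f : ℝ → ℝ)
    (hD : ∀ s, 0 ≤ D s) (hD1 : ∑ s, D s = 1)
    (hP : ∀ s s', 0 ≤ P s s') (hP1 : ∀ s, ∑ s', P s s' = 1)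
    (hstat : ∀ s', ∑ s, D s * P s s' = D s')
    (hx : ∀ s, ‖x s‖ ≤ 1)
    (hγ0 : 0 ≤ γ) (hγ1 : γ < 1) (hL : 1 ≤ L)
    (hf : StrictMono f)
    (hfLip : ∀ a b : ℝ, (1 / L) * |a - b| ≤ |f a - f b| ∧ |f a - f b| ≤ L * |a - b|)
    (W : Set (EuclideanSpace ℝ (Fin d)))
    (hWne : W.Nonempty) (hWcpt : IsCompact W) (hWcvx : Convex ℝ W)
    (hγL : γ * L ^ 2 < 1)
    (ω : ℝ) (hω : 0 < ω)
    (hcov : ∀ v : EuclideanSpace ℝ (Fin d), ω * ‖v‖ ^ 2 ≤ ∑ s, D s * ⟪x s, v⟫ ^ 2)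
    (w : ℕ → EuclideanSpace ℝ (Fin d)) (hwW : ∀ t, w t ∈ W)
    (hupd : ∀ t, ∀ u ∈ W,
      ‖w t + ((1 - γ * L ^ 2) / (4 * L ^ 3)) • tdExpected D P x r γ f (w t) - w (t + 1)‖ ≤
        ‖w t + ((1 - γ * L ^ 2) / (4 * L ^ 3)) • tdExpected D P x r γ f (w t) - u‖)
    (wstar : EuclideanSpace ℝ (Fin d)) (hwstar : wstar ∈ W)
    (hfix : ∀ u ∈ W,
      ‖wstar + ((1 - γ * L ^ 2) / (4 * L ^ 3)) • tdExpected D P x r γ f wstar - wstar‖ ≤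
        ‖wstar + ((1 - γ * L ^ 2) / (4 * L ^ 3)) • tdExpected D P x r γ f wstar - u‖)
    (T : ℕ) :
    ‖wstar - w T‖ ^ 2 ≤
      Real.exp (-(T : ℝ) * ω * ((1 - γ * L ^ 2) / (2 * L ^ 2)) ^ 2) *
        ‖wstar - w 0‖ ^ 2 := by
  have hL0 : 0 < L := by linarith
  have hα : 0 ≤ (1 - γ * L ^ 2) / (4 * L ^ 3) := div_nonneg (by linarith) (by positivity)
  have hfMono := mul_sq_sub_le_of_monotone_of_mul_abs_sub_le hf.monotone fun a b => (hfLip a b).1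
  have hfLipschitz : LipschitzWith ⟨L, hL0.le⟩ f :=
    LipschitzWith.of_dist_le_mul fun a b => (hfLip a b).2
  exact td_expected_update_last_iterate_rate_general r hD hD1 hP hP1 hstat hx hγ0 hfMono hfLipschitz
    hWcvx hcov hα (sq_nonneg _) (sq_le_contraction_rate_of_step_size hγ0 hγ1.le hL0)
    (fun t => ⟨hwW (t + 1), hupd t⟩) ⟨hwstar, hfix⟩ T
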